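/- Let S be a Boolean inverse semigroup. Then: (1) if S is semisimple, the groupoid G(S) of prime filters of S is isomorphic to the groupoid of atoms of S under the restricted product, via the map sending an atom a to the ultrafilter a↑; (2) S is semisimple if and only if the topology on G(S) (with basic open sets V_a = {prime filters containing a}) is discrete. -/

import Mathlib

namespace Paper

/-- An inverse semigroup with zero: an associative multiplication, a zero that is
absorbing, and a map `⁻¹` sending each element to its unique generalized inverse. -/
class IsInverseSemigroup (S : Type*) [Mul S] [Zero S] [Inv S] : Prop where
  mul_assoc : ∀ a b c : S, a * b * c = a * (b * c)
  mul_inv_mul : ∀ a : S, a * a⁻¹ * a = a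
  inv_mul_inv : ∀ a : S, a⁻¹ * a * a⁻¹ = a⁻¹
  inv_unique : ∀ a b : S, a * b * a = a → b * a * b = b → b = a⁻¹
  zero_mul : ∀ a : S, 0 * a = 0
  mul_zero : ∀ a : S, a * 0 = 0

variable {S : Type*} [Mul S] [Zero S] [Inv S]

/-- The natural partial order: `a ≤ b` iff `a = b * a⁻¹ * a`. -/
def nle (a b : S) : Prop := a = b * a⁻¹ * a

/-- `e` is an idempotent. -/
def idem (e : S) : Prop := e * e = e

/-- `a` and `b` are compatible. -/
def compat (a b : S) : Prop := idem (a⁻¹ * b) ∧ idem (a * b⁻¹)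

/-- `a` and `b` are orthogonal. -/
def orth (a b : S) : Prop := a⁻¹ * b = 0 ∧ a * b⁻¹ = 0

/-- `j` is the least upper bound of `a` and `b` for the natural partial order. -/
def isJoin (a b j : S) : Prop :=
  nle a j ∧ nle b j ∧ ∀ c : S, nle a c → nle b c → nle j c

/-- `m` is the greatest lower bound of `a` and `b` for the natural partial order. -/
def isMeet (a b m : S) : Prop :=
  nle m a ∧ nle m b ∧ ∀ c : S, nle c a → nle c b → nle c m

/-- `a` is an atom: a nonzero element with nothing strictly between it and `0`. -/
def isAtomElem (a : S) : Prop := a ≠ 0 ∧ ∀ x : S, nle x a → x = a ∨ x = 0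

/-- `s` is the least upper bound of the finite family `f`. -/
def isJoinFin {m : ℕ} (f : Fin m → S) (s : S) : Prop :=
  (∀ i, nle (f i) s) ∧ ∀ c : S, (∀ i, nle (f i) c) → nle s c

/-- A Boolean inverse semigroup: a nonzero inverse semigroup with zero in which
compatible pairs have joins, multiplication distributes over binary compatible joins,
and the idempotents form a generalized Boolean algebra under the natural partial
order (meets of idempotents are automatically given by multiplication; the extra
requirement is the existence of relative complements). -/
class IsBooleanInverseSemigroup (S : Type*) [Mul S] [Zero S] [Inv S]
    extends IsInverseSemigroup S : Prop where
  exists_ne_zero : ∃ a : S, a ≠ 0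
  compat_join : ∀ a b : S, compat a b → ∃ j, isJoin a b j
  mul_join : ∀ a b j c : S, isJoin a b j → isJoin (c * a) (c * b) (c * j)
  join_mul : ∀ a b j c : S, isJoin a b j → isJoin (a * c) (b * c) (j * c)
  relcomp : ∀ e f : S, idem e → idem f → nle f e →
    ∃ g : S, idem g ∧ nle g e ∧ g * f = 0 ∧ isJoin f g e


/-- The principal up-set of `a`. -/
def upSet {S : Type*} [Mul S] [Inv S] (a : S) : Set S := {x | nle a x}

/-- The upward closure of a set for the natural partial order. -/
def upClosure {S : Type*} [Mul S] [Inv S] (A : Set S) : Set S :=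
  {x | ∃ a ∈ A, nle a x}

/-- The setwise product. -/
def setProd {S : Type*} [Mul S] (A B : Set S) : Set S :=
  {z | ∃ a ∈ A, ∃ b ∈ B, z = a * b}

/-- The setwise inverse. -/
def invSet {S : Type*} [Inv S] (A : Set S) : Set S := {x | ∃ a ∈ A, x = a⁻¹}

/-- A filter: a nonempty, down-directed, upward-closed subset. -/
def isFilterSet {S : Type*} [Mul S] [Inv S] (F : Set S) : Prop :=
  F.Nonempty ∧ (∀ a ∈ F, ∀ b ∈ F, ∃ c ∈ F, nle c a ∧ nle c b) ∧
    ∀ a ∈ F, ∀ b : S, nle a b → b ∈ F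

/-- A prime filter: a proper filter such that `a ∨ b ∈ F` implies `a ∈ F` or
`b ∈ F`. -/
def isPrimeFilter {S : Type*} [Mul S] [Zero S] [Inv S] (F : Set S) : Prop :=
  isFilterSet F ∧ (0 : S) ∉ F ∧
    ∀ a b j : S, isJoin a b j → j ∈ F → a ∈ F ∨ b ∈ F

/-- The set of prime filters of `S` (the underlying set of the groupoid `G(S)`). -/
def PrimeFilters (S : Type*) [Mul S] [Zero S] [Inv S] :=
  {F : Set S // isPrimeFilter F}


section helpers
variable {S : Type*} [Mul S] [Zero S] [Inv S]

section inv
variable [IsInverseSemigroup S]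

theorem hma (a b c : S) : a * b * c = a * (b * c) := IsInverseSemigroup.mul_assoc a b c
theorem hmim (a : S) : a * (a⁻¹ * a) = a := by
  rw [← hma]; exact IsInverseSemigroup.mul_inv_mul a
theorem himi (a : S) : a⁻¹ * (a * a⁻¹) = a⁻¹ := by
  rw [← hma]; exact IsInverseSemigroup.inv_mul_inv a
theorem huniq (a b : S) (h : a * (b * a) = a) (h' : b * (a * b) = b) : b = a⁻¹ :=
  IsInverseSemigroup.inv_unique a b (by rw [hma, h]) (by rw [hma, h'])
theorem hzm (a : S) : 0 * a = 0 := IsInverseSemigroup.zero_mul a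
theorem hmz (a : S) : a * 0 = 0 := IsInverseSemigroup.mul_zero a
theorem hii (a : S) : a⁻¹⁻¹ = a := (huniq a⁻¹ a (himi a) (hmim a)).symm

theorem idem_l {e : S} (he : idem e) (x : S) : e * (e * x) = e * x := by
  rw [← hma]; rw [show e * e = e from he]

theorem idem_inv {e : S} (he : idem e) : e⁻¹ = e :=
  (huniq e e (by rw [idem_l he]; exact he) (by rw [idem_l he]; exact he)).symm

theorem idem_mul {e f : S} (he : idem e) (hf : idem f) : idem (e * f) := by
  have h1 := hmim (e * f)
  have h2 := himi (e * f)
  set x := (e * f)⁻¹ with hx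
  have e1 : f * (x * e) = x := by
    apply huniq
    · simp only [hma, idem_l he, idem_l hf] at h1 ⊢; exact h1
    · have : x * (e * (f * (x * e))) = x * e := by
        have := congrArg (· * e) h2
        simpa only [hma] using this
      simp only [hma, idem_l he, idem_l hf, this]
  have e2 : idem x := by
    unfold idem
    have h3 : x * (e * (f * (x * e))) = x * e := by
        have := congrArg (· * e) h2
        simpa only [hma] using this
    calc x * x = (f * (x * e)) * (f * (x * e)) := by rw [e1]
      _ = f * (x * e) := by simp only [hma, h3]
      _ = x := e1
  have e3 : e * f = x := by
    rw [← hii (e * f), ← hx, idem_inv e2]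
  rw [e3]; exact e2

theorem idem_comm {e f : S} (he : idem e) (hf : idem f) : e * f = f * e := by
  have h1 := idem_mul he hf
  have h2 := idem_mul hf he
  have : f * e = (e * f)⁻¹ := by
    apply huniq
    · have : e * f * (e * f) = e * f := h1
      simp only [hma, idem_l he, idem_l hf] at this ⊢; exact this
    · have : f * e * (f * e) = f * e := h2
      simp only [hma, idem_l he, idem_l hf] at this ⊢; exact this
  rw [this, idem_inv h1]

theorem idem_d (a : S) : idem (a⁻¹ * a) := by
  unfold idem; rw [hma, hmim]
theorem idem_r (a : S) : idem (a * a⁻¹) := by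
  unfold idem; rw [hma, himi]
theorem idem_zero : idem (0 : S) := hzm 0

theorem hmi (a b : S) : (a * b)⁻¹ = b⁻¹ * a⁻¹ := by
  symm
  have hc := idem_comm (idem_r b) (idem_d a)
  apply huniq
  · calc a * b * (b⁻¹ * a⁻¹ * (a * b)) = a * ((b * b⁻¹) * (a⁻¹ * a)) * b := by simp only [hma]
      _ = (a * (a⁻¹ * a)) * (b * (b⁻¹ * b)) := by rw [hc]; simp only [hma]
      _ = a * b := by rw [hmim, hmim]
  · calc b⁻¹ * a⁻¹ * (a * b * (b⁻¹ * a⁻¹)) = b⁻¹ * ((a⁻¹ * a) * (b * b⁻¹)) * a⁻¹ := by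
          simp only [hma]
      _ = (b⁻¹ * (b * b⁻¹)) * (a⁻¹ * (a * a⁻¹)) := by rw [← hc]; simp only [hma]
      _ = b⁻¹ * a⁻¹ := by rw [himi, himi]

theorem nle_d {a b : S} (h : nle a b) : b * (a⁻¹ * a) = a := by
  rw [← hma]; exact h.symm

theorem nle_of_r {a e : S} (he : idem e) : nle (a * e) a := by
  unfold nle
  rw [hmi, idem_inv he]
  have := idem_comm he (idem_d a)
  calc a * e = a * (a⁻¹ * a) * (e * e) := by rw [hmim, he]
    _ = a * ((a⁻¹ * a) * e) * e := by simp only [hma]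
    _ = a * (e * a⁻¹) * (a * e) := by rw [← this]; simp only [hma]

theorem idem_conj {e : S} (he : idem e) (a : S) : idem (a * e * a⁻¹) := by
  unfold idem
  calc a * e * a⁻¹ * (a * e * a⁻¹) = a * (e * (a⁻¹ * a)) * (e * a⁻¹) := by simp only [hma]
    _ = (a * (a⁻¹ * a)) * (e * e) * a⁻¹ := by
        rw [idem_comm he (idem_d a)]; simp only [hma]
    _ = a * e * a⁻¹ := by rw [hmim, he]

theorem r_swap {e : S} (he : idem e) (a : S) : a * e = (a * e * a⁻¹) * a := by
  calc a * e = a * (a⁻¹ * a) * e := by rw [hmim]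
    _ = a * ((a⁻¹ * a) * e) := by simp only [hma]
    _ = _ := by rw [← idem_comm he (idem_d a)]; simp only [hma]

theorem l_swap {e : S} (he : idem e) (a : S) : e * a = a * (a⁻¹ * e * a) := by
  calc e * a = e * (a * a⁻¹) * a := by rw [hma, hma, hmim]
    _ = (a * a⁻¹) * e * a := by rw [idem_comm he (idem_r a)]
    _ = _ := by simp only [hma]

theorem idem_conj' {e : S} (he : idem e) (a : S) : idem (a⁻¹ * e * a) := by
  have := idem_conj he a⁻¹
  rwa [hii] at this

theorem nle_of_l {a e : S} (he : idem e) : nle (e * a) a := by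
  rw [l_swap he]; exact nle_of_r (idem_conj' he a)

theorem nle_refl (a : S) : nle a a := by
  unfold nle; rw [hma, hmim]

theorem nle_trans {a b c : S} (h : nle a b) (h' : nle b c) : nle a c := by
  rw [← nle_d h, ← nle_d h', hma]
  exact nle_of_r (idem_mul (idem_d _) (idem_d _))

theorem d_le {a b : S} (h : nle a b) : (b⁻¹ * b) * (a⁻¹ * a) = a⁻¹ * a := by
  have e : a⁻¹ = (a⁻¹ * a) * b⁻¹ := by
    conv_lhs => rw [← nle_d h]
    rw [hmi, idem_inv (idem_d a)]
  calc (b⁻¹ * b) * (a⁻¹ * a) = (b⁻¹ * b) * (a⁻¹ * a) * (a⁻¹ * a) := by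
        rw [hma (b⁻¹ * b), idem_d a]
    _ = (a⁻¹ * a) * b⁻¹ * (b * (a⁻¹ * a)) := by
        rw [idem_comm (idem_d b) (idem_d a)]; simp only [hma]
    _ = a⁻¹ * a := by rw [← e, nle_d h]

theorem nle_antisymm {a b : S} (h : nle a b) (h' : nle b a) : a = b := by
  have h1 := d_le h
  have h2 := d_le h'
  rw [idem_comm (idem_d _) (idem_d _)] at h1
  have h3 : a⁻¹ * a = b⁻¹ * b := h1.symm.trans h2
  rw [← nle_d h, h3, hmim]

theorem zero_nle (a : S) : nle 0 a := by
  unfold nle; rw [hmz]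

theorem nle_zero {a : S} (h : nle a 0) : a = 0 := nle_antisymm h (zero_nle a)

theorem mul_mono {a b c d : S} (h : nle a b) (h' : nle c d) : nle (a * c) (b * d) := by
  have h1 : nle (a * c) (b * c) := by
    rw [← nle_d h, r_swap (idem_d a), hma]
    exact nle_of_l (idem_conj (idem_d a) b)
  have h2 : nle (b * c) (b * d) := by
    rw [← nle_d h', ← hma]
    exact nle_of_r (idem_d c)
  exact nle_trans h1 h2

theorem inv_mono {a b : S} (h : nle a b) : nle a⁻¹ b⁻¹ := by
  rw [← nle_d h, hmi, idem_inv (idem_d a)]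
  exact nle_of_l (idem_d a)

theorem atom_ne {a x : S} (ha : isAtomElem a) (h : nle x a) (hx : x ≠ 0) : x = a :=
  (ha.2 x h).resolve_right hx

theorem atom_filter {a : S} {F : Set S} (hF : isPrimeFilter F) (ha : isAtomElem a)
    (h : a ∈ F) : F = upSet a := by
  ext b
  constructor
  · intro hb
    obtain ⟨c, hc, h1, h2⟩ := hF.1.2.1 a h b hb
    have : c = a := atom_ne ha h1 (fun h0 => hF.2.1 (h0 ▸ hc))
    exact this ▸ h2
  · intro hb
    exact hF.1.2.2 a h b hb

theorem up_mul (a b : S) : upClosure (setProd (upSet a) (upSet b)) = upSet (a * b) := by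
  ext x
  constructor
  · rintro ⟨y, ⟨p, hp, q, hq, rfl⟩, h⟩
    exact nle_trans (mul_mono hp hq) h
  · intro h
    exact ⟨a * b, ⟨a, nle_refl a, b, nle_refl b, rfl⟩, h⟩

theorem up_inv (a : S) : invSet (upSet a) = upSet a⁻¹ := by
  ext x
  constructor
  · rintro ⟨y, hy, rfl⟩
    exact inv_mono hy
  · intro h
    refine ⟨x⁻¹, ?_, (hii x).symm⟩
    have := inv_mono h
    rwa [hii] at this

theorem up_inj {a b : S} (h : upSet a = upSet b) : a = b := by
  have h1 : b ∈ upSet a := h ▸ nle_refl b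
  have h2 : a ∈ upSet b := h ▸ nle_refl a
  exact nle_antisymm h1 h2

end inv

section bool
variable [IsBooleanInverseSemigroup S]

theorem jmul {a b j : S} (c : S) (h : isJoin a b j) : isJoin (a * c) (b * c) (j * c) :=
  IsBooleanInverseSemigroup.join_mul a b j c h

/-- below a join, restricted. -/
theorem le_of_join {a b j x : S} (h : isJoin a b j) (hx : nle x j)
    (h0 : a * (x⁻¹ * x) = 0) : nle x b := by
  have := jmul (x⁻¹ * x) h
  rw [h0, nle_d hx] at this
  exact nle_trans (this.2.2 _ (zero_nle _) (nle_refl _)) (nle_of_r (idem_d x))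

/-- complements -/
theorem compl {x a : S} (h : nle x a) : ∃ g : S, idem g ∧ x * g = 0 ∧
    g * (x⁻¹ * x) = 0 ∧ isJoin x (a * g) a := by
  have hle : nle (x⁻¹ * x) (a⁻¹ * a) := by
    have := d_le h
    rw [← this]; exact nle_of_r (idem_d x)
  obtain ⟨g, hg, hga, hgx, hj⟩ := IsBooleanInverseSemigroup.relcomp _ _ (idem_d a) (idem_d x) hle
  refine ⟨g, hg, ?_, hgx, ?_⟩
  · have : (x⁻¹ * x) * g = 0 := by rw [idem_comm (idem_d x) hg, hgx]
    rw [← hmim x, hma, this, hmz]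
  · have := IsBooleanInverseSemigroup.mul_join _ _ _ a hj
    rwa [nle_d h, hmim] at this

theorem atom_prime {a : S} (ha : isAtomElem a) : isPrimeFilter (upSet a) := by
  refine ⟨⟨⟨a, nle_refl a⟩, fun x hx y hy => ⟨a, nle_refl a, hx, hy⟩,
    fun x hx y h => nle_trans hx h⟩, fun h => ha.1 (nle_zero h), ?_⟩
  intro b c j hj haj
  have hb : nle (b * (a⁻¹ * a)) a := by
    have := nle_d hj.1
    rw [← this, hma, idem_comm (idem_d b) (idem_d a), ← hma, nle_d haj]
    exact nle_of_r (idem_d b)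
  rcases ha.2 _ hb with h | h
  · left
    have := nle_of_r (a := b) (idem_d a)
    rwa [h] at this
  · right
    exact le_of_join hj haj h

theorem exists_prime (D : Set S) (hne : D.Nonempty)
    (hd : ∀ a ∈ D, ∀ b ∈ D, ∃ c ∈ D, nle c a ∧ nle c b) (h0 : (0:S) ∉ D) :
    ∃ F, isPrimeFilter F ∧ D ⊆ F := by
  have key : ∀ E : Set S, E.Nonempty → (∀ a ∈ E, ∀ b ∈ E, ∃ c ∈ E, nle c a ∧ nle c b) →
      (0:S) ∉ E → isFilterSet (upClosure E) ∧ (0:S) ∉ upClosure E ∧ E ⊆ upClosure E := by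
    intro E hE hd h0
    refine ⟨⟨?_, ?_, ?_⟩, ?_, fun x hx => ⟨x, hx, nle_refl x⟩⟩
    · obtain ⟨x, hx⟩ := hE
      exact ⟨x, x, hx, nle_refl x⟩
    · rintro x ⟨a, ha, hax⟩ y ⟨b, hb, hby⟩
      obtain ⟨c, hc, h1, h2⟩ := hd a ha b hb
      exact ⟨c, ⟨c, hc, nle_refl c⟩, nle_trans h1 hax, nle_trans h2 hby⟩
    · rintro x ⟨a, ha, hax⟩ y hxy
      exact ⟨a, ha, nle_trans hax hxy⟩
    · rintro ⟨a, ha, h⟩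
      exact h0 (nle_zero h ▸ ha)
  obtain ⟨k1, k2, k3⟩ := key D hne hd h0
  obtain ⟨F, hDF, hF⟩ := zorn_subset_nonempty {F : Set S | isFilterSet F ∧ (0:S) ∉ F} (by
    intro c hc hchain hcne
    refine ⟨⋃₀ c, ⟨⟨?_, ?_, ?_⟩, ?_⟩, fun s hs => Set.subset_sUnion_of_mem hs⟩
    · obtain ⟨s, hs⟩ := hcne
      obtain ⟨x, hx⟩ := (hc hs).1.1
      exact ⟨x, s, hs, hx⟩
    · rintro a ⟨s, hs, has⟩ b ⟨t, ht, hbt⟩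
      rcases hchain.total hs ht with h | h
      · obtain ⟨z, hz, h1⟩ := (hc ht).1.2.1 a (h has) b hbt
        exact ⟨z, ⟨t, ht, hz⟩, h1⟩
      · obtain ⟨z, hz, h1⟩ := (hc hs).1.2.1 a has b (h hbt)
        exact ⟨z, ⟨s, hs, hz⟩, h1⟩
    · rintro a ⟨s, hs, has⟩ b hab
      exact ⟨s, hs, (hc hs).1.2.2 a has b hab⟩
    · rintro ⟨s, hs, h⟩
      exact (hc hs).2 h) (upClosure D) ⟨k1, k2⟩
  refine ⟨F, ⟨hF.prop.1, hF.prop.2, ?_⟩, k3.trans hDF⟩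
  obtain ⟨⟨f1, f2, f3⟩, f4⟩ := hF.prop
  intro a b j hj hjF
  by_contra hcon
  push Not at hcon
  obtain ⟨haF, hbF⟩ := hcon
  -- the filter generated by x * d(a)
  have hex : ∃ x ∈ F, x * (a⁻¹ * a) = 0 := by
    by_contra hno
    push Not at hno
    obtain ⟨q1, q2, q3⟩ := key {z | ∃ x ∈ F, z = x * (a⁻¹ * a)} ⟨_, j, hjF, rfl⟩ (by
      rintro _ ⟨x, hx, rfl⟩ _ ⟨y, hy, rfl⟩
      obtain ⟨z, hz, h1, h2⟩ := f2 x hx y hy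
      exact ⟨_, ⟨z, hz, rfl⟩, mul_mono h1 (nle_refl _), mul_mono h2 (nle_refl _)⟩)
      (by rintro ⟨x, hx, h⟩; exact hno x hx h.symm)
    have hsub := hF.le_of_ge (y := upClosure {z | ∃ x ∈ F, z = x * (a⁻¹ * a)}) ⟨q1, q2⟩
      (fun x hx => ⟨_, ⟨x, hx, rfl⟩, nle_of_r (idem_d a)⟩)
    apply haF
    apply hsub
    exact q3 ⟨j, hjF, (nle_d hj.1).symm⟩
  obtain ⟨x, hx, hxa⟩ := hex
  obtain ⟨y, hy, hyx, hyj⟩ := f2 x hx j hjF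
  have hya : y * (a⁻¹ * a) = 0 := by
    apply nle_zero
    rw [← hxa]
    exact mul_mono hyx (nle_refl _)
  apply hbF
  refine f3 y hy b (le_of_join hj hyj ?_)
  rw [← nle_d hj.1, hma, idem_comm (idem_d a) (idem_d y), ← hma, nle_d hyj, hya]

theorem exists_prime_mem {a : S} (ha : a ≠ 0) : ∃ F, isPrimeFilter F ∧ a ∈ F := by
  obtain ⟨F, hF, h⟩ := exists_prime {a} ⟨a, rfl⟩
    (by rintro x rfl y rfl; exact ⟨_, rfl, nle_refl _, nle_refl _⟩)
    (by intro h; exact ha h.symm)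
  exact ⟨F, hF, h rfl⟩

theorem disj {x a g : S} {F : Set S} (hF : isPrimeFilter F) (hx : x ∈ F) (h : a * g ∈ F)
    (hg : idem g) (hxg : x * g = 0) : False := by
  obtain ⟨c, hc, h1, h2⟩ := hF.1.2.1 x hx _ h
  have e1 : c * g = 0 := by
    apply nle_zero; rw [← hxg]; exact mul_mono h1 (nle_refl _)
  have e2 : c * g = c := by
    calc c * g = a * g * (c⁻¹ * c) * g := by rw [nle_d h2]
      _ = a * (g * ((c⁻¹ * c) * g)) := by simp only [hma]
      _ = a * g * (c⁻¹ * c) := by rw [idem_comm (idem_d c) hg, idem_l hg, ← hma]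
      _ = c := nle_d h2
  exact hF.2.1 (by rw [← e1, e2]; exact hc)

theorem prime_atom (hS : ∀ a : S, {x : S | nle x a}.Finite) {F : Set S}
    (hF : isPrimeFilter F) : ∃ a : S, isAtomElem a ∧ F = upSet a := by
  classical
  obtain ⟨x, hx, hmin⟩ : ∃ x ∈ F, ∀ y ∈ F, nle y x → y = x := by
    obtain ⟨x, hx, hm⟩ := exists_minimalFor_of_wellFoundedLT (· ∈ F)
      (fun a => {x : S | nle x a}.ncard) hF.1.1
    refine ⟨x, hx, fun y hy hyx => ?_⟩
    by_contra hne
    have hlt : {z : S | nle z y}.ncard < {z : S | nle z x}.ncard := by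
      apply Set.ncard_lt_ncard _ (hS x)
      refine ⟨fun z hz => nle_trans hz hyx, fun h => hne ?_⟩
      exact nle_antisymm hyx (h (nle_refl x))
    have := hm hy hlt.le
    simp only at this
    omega
  have hat : isAtomElem x := by
    refine ⟨fun h => hF.2.1 (h ▸ hx), fun z hz => ?_⟩
    obtain ⟨g, hg, hzg, hgz, hj⟩ := compl hz
    rcases hF.2.2 _ _ _ hj hx with h | h
    · exact Or.inl (hmin z h hz)
    · right
      have := hmin _ h (nle_of_r hg)
      rw [← nle_d hz, ← this, hma, hgz, hmz]
  exact ⟨x, hat, atom_filter hF hat hx⟩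

theorem fin_of_atoms (hA : ∀ F : Set S, isPrimeFilter F → ∃ b ∈ F, isAtomElem b) (a : S) :
    {x : S | nle x a}.Finite := by
  by_contra hinf
  let D : Set S := {y | nle y a ∧ {z : S | nle z a ∧ z * (y⁻¹ * y) = 0}.Finite}
  have haD : a ∈ D := by
    refine ⟨nle_refl a, (Set.finite_singleton (0:S)).subset ?_⟩
    rintro z ⟨hz, h⟩
    have : z * (a⁻¹ * a) = z := by
      rw [← nle_d hz, hma, idem_comm (idem_d z) (idem_d a), ← hma, hmim]
    exact this.symm.trans h
  obtain ⟨F, hF, hDF⟩ := exists_prime D ⟨a, haD⟩ (by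
    rintro x ⟨hx, hxf⟩ y ⟨hy, hyf⟩
    have hxy : nle (x * (y⁻¹ * y)) y := by
      rw [← nle_d hx, hma, idem_comm (idem_d x) (idem_d y), ← hma, nle_d hy]
      exact nle_of_r (idem_d x)
    refine ⟨x * (y⁻¹ * y), ⟨nle_trans hxy hy, ?_⟩, nle_of_r (idem_d y), hxy⟩
    obtain ⟨g, hg, hxg, hgx, hj⟩ := compl hx
    have hdd : (x * (y⁻¹ * y))⁻¹ * (x * (y⁻¹ * y)) = (x⁻¹ * x) * (y⁻¹ * y) := by
      calc _ = (y⁻¹ * y) * (x⁻¹ * x) * (y⁻¹ * y) := by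
            rw [hmi, idem_inv (idem_d y)]; simp only [hma]
        _ = _ := by rw [idem_comm (idem_d y) (idem_d x), hma, idem_d y]
    have hinj : Set.InjOn (fun z : S => (z * g, z * (x⁻¹ * x)))
        {z : S | nle z a ∧ z * ((x * (y⁻¹ * y))⁻¹ * (x * (y⁻¹ * y))) = 0} := by
      have hdec : ∀ z, nle z a → isJoin (z * (x⁻¹ * x)) (z * g) z := by
        intro z hz
        have := jmul (z⁻¹ * z) hj
        rw [nle_d hz] at this
        have e1 : x * (z⁻¹ * z) = z * (x⁻¹ * x) := by
          conv_lhs => rw [← nle_d hx]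
          rw [hma, idem_comm (idem_d x) (idem_d z), ← hma, nle_d hz]
        have e2 : a * g * (z⁻¹ * z) = z * g := by
          rw [hma, idem_comm hg (idem_d z), ← hma, nle_d hz]
        rwa [e1, e2] at this
      rintro z ⟨hz, -⟩ w ⟨hw, -⟩ h
      simp only [Prod.mk.injEq] at h
      have h1 := hdec z hz
      have h2 := hdec w hw
      rw [h.1, h.2] at h1
      exact nle_antisymm (h1.2.2 _ h2.1 h2.2.1) (h2.2.2 _ h1.1 h1.2.1)
    refine Set.Finite.of_finite_image ((hxf.prod hyf).subset ?_) hinj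
    rintro _ ⟨z, ⟨hz, h⟩, rfl⟩
    refine ⟨⟨nle_trans (nle_of_r hg) hz, ?_⟩, nle_trans (nle_of_r (idem_d x)) hz, ?_⟩
    · simp only [hma] at hgx ⊢
      rw [hgx, hmz]
    · rw [hdd] at h
      simp only [hma] at h ⊢
      exact h) (by
    rintro ⟨-, h⟩
    apply hinf
    refine h.subset fun z hz => ⟨hz, ?_⟩
    rw [hmz, hmz])
  obtain ⟨b, hb, hat⟩ := hA F hF
  have hba : nle b a := by
    have := atom_filter hF hat hb
    have h2 := hDF haD
    rw [this] at h2
    exact h2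
  obtain ⟨g, hg, hbg, hgb, hj⟩ := compl hba
  refine disj hF hb (hDF (a := a * g) ⟨nle_of_r hg, ?_⟩) hg hbg
  refine (Set.toFinite ({b, 0} : Set S)).subset ?_
  rintro z ⟨hz, h⟩
  have : nle z b := by
    refine le_of_join (a := a * g) ⟨hj.2.1, hj.1, fun c h1 h2 => hj.2.2 c h2 h1⟩ hz ?_
    have e : a * g * ((a * g)⁻¹ * (a * g)) = a * g := hmim _
    generalize hk : (a * g)⁻¹ * (a * g) = k at e h
    have ik : idem k := hk ▸ idem_d _
    calc a * g * (z⁻¹ * z) = a * g * k * (z⁻¹ * z) := by rw [e]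
      _ = a * (g * (k * (z⁻¹ * z))) := by simp only [hma]
      _ = a * ((z⁻¹ * z) * k * g) := by
          rw [idem_comm ik (idem_d z), idem_comm hg (idem_mul (idem_d z) ik)]
      _ = a * (z⁻¹ * z) * k * g := by simp only [hma]
      _ = 0 := by rw [nle_d hz, h, hzm]
  exact hat.2 z this

theorem open_basis {U : Set (PrimeFilters S)}
    (hU : TopologicalSpace.GenerateOpen
      {U : Set (PrimeFilters S) | ∃ a : S, U = {F | a ∈ F.val}} U) :
    ∀ F ∈ U, ∃ a ∈ F.val, ∀ G : PrimeFilters S, a ∈ G.val → G ∈ U := by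
  induction hU with
  | basic s hs =>
    obtain ⟨a, rfl⟩ := hs
    exact fun F hF => ⟨a, hF, fun G hG => hG⟩
  | univ =>
    intro F _
    obtain ⟨a, ha⟩ := F.2.1.1
    exact ⟨a, ha, fun _ _ => trivial⟩
  | inter s t _ _ ihs iht =>
    rintro F ⟨h1, h2⟩
    obtain ⟨a, ha, ha'⟩ := ihs F h1
    obtain ⟨b, hb, hb'⟩ := iht F h2
    obtain ⟨c, hc, hca, hcb⟩ := F.2.1.2.1 a ha b hb
    exact ⟨c, hc, fun G hG => ⟨ha' G (G.2.1.2.2 c hG a hca), hb' G (G.2.1.2.2 c hG b hcb)⟩⟩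
  | sUnion T _ ih =>
    rintro F ⟨s, hs, hF⟩
    obtain ⟨a, ha, h⟩ := ih s hs F hF
    exact ⟨a, ha, fun G hG => ⟨s, hs, h G hG⟩⟩

theorem atom_of_isolated {a : S} {F : Set S} (hF : isPrimeFilter F) (ha : a ∈ F)
    (h : ∀ G, isPrimeFilter G → a ∈ G → G = F) : isAtomElem a := by
  refine ⟨fun h => hF.2.1 (h ▸ ha), fun x hx => ?_⟩
  by_contra hcon
  push Not at hcon
  obtain ⟨hxa, hx0⟩ := hcon
  obtain ⟨g, hg, hxg, hgx, hj⟩ := compl hx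
  have hag : a * g ≠ 0 := by
    intro h0
    rw [h0] at hj
    exact hxa (nle_antisymm hx (hj.2.2 x (nle_refl x) (zero_nle x)))
  obtain ⟨F1, hF1, h1⟩ := exists_prime_mem hx0
  obtain ⟨F2, hF2, h2⟩ := exists_prime_mem hag
  have e1 := h F1 hF1 (hF1.1.2.2 _ h1 _ hx)
  have e2 := h F2 hF2 (hF2.1.2.2 _ h2 _ (nle_of_r hg))
  subst e1
  subst e2
  exact disj hF h1 h2 hg hxg

end bool
end helpers

/-- (1) If a Boolean inverse semigroup `S` is semisimple, then the groupoid `G(S)`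
of prime filters of `S` is isomorphic to the groupoid of atoms of `S` under the
restricted product, via the map `a ↦ a↑`: this map is a bijection from atoms onto
prime filters which matches composability (`d(a) = r(b)` iff
`(F⁻¹F)↑ = (G G⁻¹)↑` for the corresponding filters) and products
(`(a · b)↑ = (a↑ b↑)↑`).
(2) `S` is semisimple iff the topology on `G(S)` generated by the sets
`V_a = {F : a ∈ F}` is discrete. -/
theorem primeFilter_groupoid_of_semisimple (S : Type*) [Mul S] [Zero S] [Inv S]
    [IsBooleanInverseSemigroup S] :
    ((∀ a : S, {x : S | nle x a}.Finite) →
      ((∀ a : S, isAtomElem a → isPrimeFilter (upSet a)) ∧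
       (∀ a b : S, isAtomElem a → isAtomElem b → upSet a = upSet b → a = b) ∧
       (∀ F : Set S, isPrimeFilter F → ∃ a : S, isAtomElem a ∧ F = upSet a) ∧
       (∀ a b : S, isAtomElem a → isAtomElem b →
         ((a⁻¹ * a = b * b⁻¹) ↔
           upClosure (setProd (invSet (upSet a)) (upSet a)) =
             upClosure (setProd (upSet b) (invSet (upSet b)))) ∧
         (a⁻¹ * a = b * b⁻¹ →
           upClosure (setProd (upSet a) (upSet b)) = upSet (a * b))))) ∧
    ((∀ a : S, {x : S | nle x a}.Finite) ↔
      TopologicalSpace.generateFrom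
          {U : Set (PrimeFilters S) | ∃ a : S, U = {F | a ∈ F.val}} = ⊥) := by
  refine ⟨fun hS => ⟨fun a ha => atom_prime ha, fun a b _ _ h => up_inj h,
    fun F hF => prime_atom hS hF, fun a b _ _ => ⟨?_, fun _ => up_mul a b⟩⟩, ?_, ?_⟩
  · rw [up_inv, up_inv, up_mul, up_mul]
    exact ⟨fun h => by rw [h], up_inj⟩
  · intro hS
    apply eq_bot_of_singletons_open
    intro F
    obtain ⟨a, hat, hFa⟩ := prime_atom hS F.2
    apply TopologicalSpace.GenerateOpen.basic
    refine ⟨a, ?_⟩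
    ext G
    constructor
    · rintro rfl
      show a ∈ G.val
      rw [hFa]; exact nle_refl a
    · intro hG
      exact Subtype.ext ((atom_filter G.2 hat hG).trans hFa.symm)
  · intro hT
    apply fin_of_atoms
    intro F hF
    have ho : (TopologicalSpace.generateFrom
          {U : Set (PrimeFilters S) | ∃ a : S, U = {F | a ∈ F.val}}).IsOpen
          ({⟨F, hF⟩} : Set (PrimeFilters S)) := by
      rw [hT]; trivial
    obtain ⟨a, ha, h⟩ := open_basis ho ⟨F, hF⟩ rfl
    exact ⟨a, ha, atom_of_isolated hF ha
      (fun G hG haG => congrArg Subtype.val (h ⟨G, hG⟩ haG))⟩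

end Paper
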